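/- Over the alphabet {1,2}, the lengths n of C∞-words w such that ww is a C∞-word are exactly n ∈ {1, 2, 3, 9, 27}. -/

import Mathlib

/-!
A square `ww` with `|w| = n` is a word of length `2n` with period `n`. The derivative nearly
preserves this shape: if a C∞-word `x` with `2p - 5 ≤ |x|` has period `p ≥ 20`, then `D x` has a
period `q` with `2q - 5 ≤ |D x|`, where `p` is the sum of the first `q` letters of `D x`
(`descent`). Moreover `q` is even, because runs alternate between the two letters, and
`p / 2 ≤ q < p`, because letters are at most `2` and `111` does not occur. The constant `5`
reproduces itself: the middle part of `D x` that is missing from a full square has sum at most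
`5 + 2`, whereas six consecutive letters of a C∞-word have sum at least `8`.

C∞-words are closed under taking prefixes (`IsCInf.take`), so those of a given small length can be
enumerated. Enumeration shows that for even `q` with `10 ≤ q ≤ 18` such an almost-square has
sum of its first `q` letters below `20` or equal to `27`; hence, by descent, no almost-square has
an even period `≥ 20`, and every square with `n ≥ 20` has `n = 27`. The squares with `n < 20` are
found by enumeration.
-/

namespace Kola

/-- Run-length encoding of a finite word as (letter, count) pairs. -/
def rle : List ℕ → List (ℕ × ℕ)
  | [] => []
  | a :: l =>
    match rle l with
    | [] => [(a, 1)]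
    | (b, n) :: t => if a = b then (b, n + 1) :: t else (a, 1) :: (b, n) :: t

/-- Boundary adjustment for the first run: discard if length ≤ r, extend to s if length in (r,s]. -/
def fixRun (r s : ℕ) : List (ℕ × ℕ) → List (ℕ × ℕ)
  | [] => []
  | (a, n) :: t => if n ≤ r then t else if n ≤ s then (a, s) :: t else (a, n) :: t

/-- The Kolakoski derivative over the alphabet {r,s}. -/
def D (r s : ℕ) (w : List ℕ) : List ℕ :=
  match rle w with
  | [] => []
  | [(_, n)] => if n < s then [] else [n]
  | ps => ((fixRun r s ((fixRun r s ps).reverse)).reverse).map Prod.snd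

/-- A C∞-word over {r,s}: all iterated derivatives are words over {r,s}. -/
def IsCInf (r s : ℕ) (w : List ℕ) : Prop :=
  ∀ k : ℕ, ∀ a ∈ (D r s)^[k] w, a = r ∨ a = s

/-- `t` enumerates the starting indices of the (maximal) runs of the sequence `z`. -/
def IsRunPartition (z : ℕ → ℕ) (t : ℕ → ℕ) : Prop :=
  t 0 = 0 ∧ StrictMono t ∧
  (∀ k i, t k ≤ i → i < t (k + 1) → z i = z (t k)) ∧
  (∀ k, z (t (k + 1)) ≠ z (t k))

/-- `w` is the run-length sequence of `z`. -/
def IsRunLengthSeq (z w : ℕ → ℕ) : Prop :=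
  ∃ t, IsRunPartition z t ∧ ∀ k, w k = t (k + 1) - t k

/-- A Kolakoski sequence over {r,s}: a sequence over {r,s} equal to its own run-length sequence. -/
def IsKolakoski (r s : ℕ) (z : ℕ → ℕ) : Prop :=
  (∀ n, z n = r ∨ z n = s) ∧ IsRunLengthSeq z z

def EventuallyPeriodic (z : ℕ → ℕ) : Prop :=
  ∃ m q : ℕ, 1 ≤ q ∧ ∀ i, m ≤ i → z (i + q) = z i

/-- `w` occurs as a factor of the infinite sequence `z`. -/
def FactorOf (w : List ℕ) (z : ℕ → ℕ) : Prop :=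
  ∃ i, w = (List.range w.length).map fun k => z (i + k)

/-- Letter-exchange on words over {r,s}. -/
def exch (r s : ℕ) (w : List ℕ) : List ℕ := w.map fun a => if a = r then s else r

/-- Number of occurrences of `w` as a factor of the prefix of length `n` of `z`. -/
def countOcc (z : ℕ → ℕ) (w : List ℕ) (n : ℕ) : ℕ :=
  ((Finset.range n).filter fun i => i + w.length ≤ n ∧ ∀ k < w.length, z (i + k) = w.getD k 0).card

/-- All words of length n over {r,s}. -/
def allWords (r s : ℕ) : ℕ → Finset (List ℕ)
  | 0 => {[]}
  | n + 1 => (allWords r s n).image (List.cons r) ∪ (allWords r s n).image (List.cons s)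

/-! ### Words described by their run lengths -/

/-- All letters are `1` or `2`. -/
def Over (x : List ℕ) : Prop := ∀ a ∈ x, a = 1 ∨ a = 2

/-- The word over `{1,2}` with first letter `c` and run lengths `r`, letters alternating. -/
def E : ℕ → List ℕ → List ℕ
  | _, [] => []
  | c, n :: t => List.replicate n c ++ E (3 - c) t

/-- The run-length encoding of `E c r`. -/
def runPairs : ℕ → List ℕ → List (ℕ × ℕ)
  | _, [] => []
  | c, n :: t => (c, n) :: runPairs (3 - c) t

/-- Remove the first letter if it is at most `1`. -/
def sF : List ℕ → List ℕ
  | [] => []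
  | n :: t => if n ≤ 1 then t else n :: t

/-- Remove the last letter if it is at most `1`. -/
def sL (r : List ℕ) : List ℕ := (sF r.reverse).reverse

/-! ### Run lengths and the derivative -/

lemma Over.tail {a : ℕ} {x : List ℕ} (h : Over (a :: x)) : Over x :=
  fun b hb => h b (List.mem_cons_of_mem _ hb)

lemma rle_E (r : List ℕ) : ∀ c, (c = 1 ∨ c = 2) → (∀ n ∈ r, 1 ≤ n) →
    rle (E c r) = runPairs c r := by
  induction r with
  | nil => intros; rfl
  | cons n t ih =>
    intro c hc hr
    have ht := ih (3 - c) (by omega) (fun m hm => hr m (List.mem_cons_of_mem _ hm))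
    have hn : 1 ≤ n := hr n (by simp)
    obtain ⟨k, rfl⟩ : ∃ k, n = k + 1 := ⟨n - 1, by omega⟩
    clear hn hr ih
    induction k with
    | zero =>
      cases t with
      | nil => simp [E, runPairs, rle]
      | cons m u =>
        have hne : c ≠ 3 - c := by omega
        simp only [E, runPairs, zero_add, List.replicate_one, List.singleton_append, rle] at ht ⊢
        rw [ht]
        simp [hne]
    | succ k ihk =>
      simp only [E, runPairs] at ihk ⊢
      rw [List.replicate_succ, List.cons_append, rle, ihk]
      simp

lemma exists_runs (x : List ℕ) (hx : Over x) :
    ∃ c r, (c = 1 ∨ c = 2) ∧ (∀ n ∈ r, 1 ≤ n) ∧ x = E c r := by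
  induction x with
  | nil => exact ⟨1, [], by simp [E]⟩
  | cons a l ih =>
    obtain ⟨c, r, hc, hr, rfl⟩ := ih hx.tail
    have ha : a = 1 ∨ a = 2 := hx a (by simp)
    cases r with
    | nil => exact ⟨a, [1], ha, by simp, by simp [E]⟩
    | cons n t =>
      by_cases hac : a = c
      · subst hac
        exact ⟨a, (n + 1) :: t, ha, by simpa using fun m hm => hr m (by simp [hm]),
          by simp [E, List.replicate_succ]⟩
      · have : c = 3 - a := by omega
        subst this
        exact ⟨a, 1 :: n :: t, ha, by simpa using hr, by simp [E]⟩

lemma runPairs_snd (r : List ℕ) : ∀ c, (runPairs c r).map Prod.snd = r := by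
  induction r with
  | nil => intro; rfl
  | cons n t ih => intro c; simp [runPairs, ih]

lemma fixRun_snd (ps : List (ℕ × ℕ)) : (fixRun 1 2 ps).map Prod.snd = sF (ps.map Prod.snd) := by
  rcases ps with _ | ⟨⟨a, n⟩, t⟩
  · rfl
  · simp only [fixRun, List.map_cons, sF]
    split_ifs with h1 h2
    · rfl
    · have : n = 2 := by omega
      simp [this]
    · rfl

lemma D_E (c : ℕ) (r : List ℕ) (hc : c = 1 ∨ c = 2) (hr : ∀ n ∈ r, 1 ≤ n) :
    D 1 2 (E c r) = sL (sF r) := by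
  unfold D
  rw [rle_E r c hc hr]
  rcases r with _ | ⟨n, _ | ⟨m, t⟩⟩
  · rfl
  · simp only [runPairs, sF]
    by_cases h : n ≤ 1
    · simp [h, sL, sF, show n < 2 by omega]
    · simp [h, sL, sF, show ¬ n < 2 by omega]
  · simp only [runPairs, List.map_reverse, fixRun_snd, sL]
    simp [runPairs_snd]

lemma mem_sF {a : ℕ} {r : List ℕ} (ha : 2 ≤ a) (h : a ∈ r) : a ∈ sF r := by
  cases r with
  | nil => simp at h
  | cons n t =>
    simp only [sF]
    split_ifs with h1
    · rcases List.mem_cons.1 h with rfl | h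
      · omega
      · exact h
    · exact h

lemma mem_sL {a : ℕ} {r : List ℕ} (ha : 2 ≤ a) (h : a ∈ r) : a ∈ sL r := by
  simpa [sL] using mem_sF ha (List.mem_reverse.2 h)

/-- A word over `{1,2}` whose derivative is over `{1,2}` has all its run lengths, including the
boundary ones, in `{1,2}`. -/
lemma exists_runs_over {x : List ℕ} (hx : Over x) (hD : Over (D 1 2 x)) :
    ∃ c r, (c = 1 ∨ c = 2) ∧ Over r ∧ x = E c r ∧ D 1 2 x = sL (sF r) := by
  obtain ⟨c, r, hc, hr, rfl⟩ := exists_runs x hx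
  rw [D_E c r hc hr] at hD ⊢
  refine ⟨c, r, hc, fun a ha => ?_, rfl, rfl⟩
  by_cases h2 : 2 ≤ a
  · exact hD a (mem_sL h2 (mem_sF h2 ha))
  · have := hr a ha
    omega

lemma Over.one_le {r : List ℕ} (h : Over r) : ∀ n ∈ r, 1 ≤ n := fun n hn => by
  rcases h n hn with h | h <;> omega

lemma sL_append (s : List ℕ) (l : ℕ) : sL (s ++ [l]) = if l ≤ 1 then s else s ++ [l] := by
  simp only [sL, List.reverse_append, List.reverse_singleton, List.singleton_append, sF]
  split_ifs <;> simp

lemma sF_append {s : List ℕ} (hs : s ≠ []) (t : List ℕ) : sF (s ++ t) = sF s ++ t := by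
  cases s with
  | nil => exact absurd rfl hs
  | cons n u =>
    simp only [sF, List.cons_append]
    split_ifs <;> simp

lemma sL_eq (s : List ℕ) : sL s = s ∨ sL s = s.dropLast := by
  rcases List.eq_nil_or_concat s with rfl | ⟨u, l, rfl⟩
  · left; rfl
  · rw [List.concat_eq_append, sL_append]
    split_ifs
    · right; simp
    · left; rfl

lemma sL_cons {s : List ℕ} (hs : s ≠ []) (t : List ℕ) : sL (t ++ s) = t ++ sL s := by
  rcases List.eq_nil_or_concat s with rfl | ⟨u, l, rfl⟩
  · exact absurd rfl hs
  · rw [List.concat_eq_append, ← List.append_assoc, sL_append, sL_append]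
    split_ifs <;> simp

lemma E_append (r : List ℕ) : ∀ c, (c = 1 ∨ c = 2) → ∀ s, E c (r ++ s) =
    E c r ++ E (if Even r.length then c else 3 - c) s := by
  induction r with
  | nil => intro c hc s; simp [E]
  | cons n t ih =>
    intro c hc s
    simp only [List.cons_append, E, List.append_assoc, List.length_cons, Nat.even_add_one]
    rw [ih _ (by omega)]
    by_cases h : Even t.length
    · simp [h]
    · have : 3 - (3 - c) = c := by omega
      simp [h, this]

lemma E_length (r : List ℕ) : ∀ c, (E c r).length = r.sum := by
  induction r with
  | nil => intro; rfl
  | cons n t ih => intro c; simp [E, ih]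

/-! ### C∞-words are closed under prefixes -/

lemma IsCInf.over {x : List ℕ} (h : IsCInf 1 2 x) : Over x := h 0

lemma IsCInf.D {x : List ℕ} (h : IsCInf 1 2 x) : IsCInf 1 2 (D 1 2 x) := fun k => h (k + 1)

lemma Over.dropLast {x : List ℕ} (h : Over x) : Over x.dropLast :=
  fun a ha => h a (List.mem_of_mem_dropLast ha)

lemma D_dropLast {x : List ℕ} (hx : Over x) (hD : Over (D 1 2 x)) :
    D 1 2 x.dropLast = D 1 2 x ∨ D 1 2 x.dropLast = (D 1 2 x).dropLast := by
  obtain ⟨c, r, hc, hr, rfl, h⟩ := exists_runs_over hx hD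
  rw [h]
  rcases List.eq_nil_or_concat r with rfl | ⟨s, l, rfl⟩
  · left; rfl
  rw [List.concat_eq_append] at *
  have hs : Over s := fun a ha => hr a (by simp [ha])
  rcases hr l (by simp) with rfl | rfl
  · have e : (E c (s ++ [1])).dropLast = E c s := by
      rw [E_append s c hc]; simp [E]
    rw [e, D_E c s hc hs.one_le]
    by_cases hn : s = []
    · subst hn; left; rfl
    · rw [sF_append hn, sL_append]
      simpa using sL_eq (sF s)
  · have e : (E c (s ++ [2])).dropLast = E c (s ++ [1]) := by
      rw [E_append s c hc, E_append s c hc]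
      simp [E, List.replicate_succ, List.dropLast_append_of_ne_nil]
    rw [e, D_E c _ hc (by
      intro n hn
      rcases List.mem_append.1 hn with hn | hn
      · exact hs.one_le n hn
      · simp at hn; omega)]
    by_cases hn : s = []
    · subst hn; right; rfl
    · rw [sF_append hn, sL_append, sF_append hn, sL_append]
      right; simp

lemma IsCInf.dropLast {x : List ℕ} (h : IsCInf 1 2 x) : IsCInf 1 2 x.dropLast := by
  intro k
  induction k generalizing x with
  | zero => exact h.over.dropLast
  | succ k ih =>
    rw [Function.iterate_succ_apply]
    rcases D_dropLast h.over h.D.over with e | e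
    · rw [e]; exact h.D k
    · rw [e]; exact ih h.D

lemma IsCInf.left {u v : List ℕ} (h : IsCInf 1 2 (u ++ v)) : IsCInf 1 2 u := by
  induction v using List.reverseRecOn with
  | nil => simpa using h
  | append_singleton v a ih =>
    apply ih
    have := h.dropLast
    rwa [← List.append_assoc, List.dropLast_concat] at this

lemma IsCInf.take {x : List ℕ} (h : IsCInf 1 2 x) (n : ℕ) : IsCInf 1 2 (x.take n) := by
  rw [← List.take_append_drop n x] at h
  exact h.left

/-! ### Periods descend along the derivative -/

lemma no_cube_E (r : List ℕ) (hr : Over r) : ∀ c, (c = 1 ∨ c = 2) → ∀ d,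
    ¬ [d, d, d] <:+: E c r := by
  induction r with
  | nil => intro c hc d h; simp [E] at h
  | cons n t ih =>
    intro c hc d h
    have ih' := ih hr.tail (3 - c) (by omega) d
    rcases hr n (by simp) with rfl | rfl
    · simp only [E, List.replicate_one, List.singleton_append, List.infix_cons_iff, ih',
        or_false, List.cons_prefix_cons] at h
      obtain ⟨rfl, h⟩ := h
      rcases t with _ | ⟨m, u⟩
      · simp [E] at h
      · have hm := hr m (by simp)
        obtain ⟨k, rfl⟩ : ∃ k, m = k + 1 := ⟨m - 1, by omega⟩
        simp only [E, List.replicate_succ, List.cons_append, List.cons_prefix_cons] at h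
        omega
    · simp only [E, List.replicate_succ, List.replicate_zero, List.cons_append, List.nil_append,
        List.infix_cons_iff, ih', or_false, List.cons_prefix_cons] at h
      have key : d = c → ¬ [d] <+: E (3 - c) t := by
        rintro rfl h
        rcases t with _ | ⟨m, u⟩
        · simp [E] at h
        · have hm := hr m (by simp)
          obtain ⟨k, rfl⟩ : ∃ k, m = k + 1 := ⟨m - 1, by omega⟩
          simp only [E, List.replicate_succ, List.cons_append, List.cons_prefix_cons] at h
          omega
      rcases h with ⟨h1, h2, h3⟩ | ⟨h1, h2⟩
      · exact key h1 h3
      · refine key h1 (List.IsPrefix.trans ?_ h2)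
        simp

lemma IsCInf.no_cube {x : List ℕ} (h : IsCInf 1 2 x) (d : ℕ) : ¬ [d, d, d] <:+: x := by
  obtain ⟨c, r, hc, hr, rfl, -⟩ := exists_runs_over h.over h.D.over
  exact no_cube_E r hr c hc d

lemma Over.length_le_sum {v : List ℕ} (h : Over v) : v.length ≤ v.sum := by
  induction v with
  | nil => simp
  | cons a t ih =>
    have := ih h.tail
    have := h a (by simp)
    simp only [List.length_cons, List.sum_cons]; omega

lemma Over.sum_le {v : List ℕ} (h : Over v) : v.sum ≤ 2 * v.length := by
  induction v with
  | nil => simp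
  | cons a t ih =>
    have := ih h.tail
    have := h a (by simp)
    simp only [List.length_cons, List.sum_cons]; omega

/-- Six consecutive letters without `111` contain at least two letters `2`. -/
lemma sum_ge {v : List ℕ} (h : Over v) (hc : ¬ [1, 1, 1] <:+: v) (hl : 6 ≤ v.length) :
    v.length + 2 ≤ v.sum := by
  rcases v with _ | ⟨a, _ | ⟨b, _ | ⟨c, _ | ⟨d, _ | ⟨e, _ | ⟨f, t⟩⟩⟩⟩⟩⟩ <;>
    simp only [List.length_cons, List.length_nil] at hl <;> try omega
  have h1 := h a (by simp)
  have h2 := h b (by simp)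
  have h3 := h c (by simp)
  have h4 := h d (by simp)
  have h5 := h e (by simp)
  have h6 := h f (by simp)
  have ht : t.length ≤ t.sum := Over.length_le_sum fun x hx => h x (by simp [hx])
  have k1 : ¬ (a = 1 ∧ b = 1 ∧ c = 1) := by
    rintro ⟨rfl, rfl, rfl⟩
    exact hc ⟨[], d :: e :: f :: t, rfl⟩
  have k2 : ¬ (d = 1 ∧ e = 1 ∧ f = 1) := by
    rintro ⟨rfl, rfl, rfl⟩
    exact hc ⟨[a, b, c], t, rfl⟩
  simp only [List.length_cons, List.sum_cons]
  omega

/-- If one word is a prefix of another, their run lengths agree except possibly for the last run of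
the shorter word, which the longer word may continue if its length is `1`. -/
lemma lockstep (s : List ℕ) : ∀ r c, (c = 1 ∨ c = 2) → Over s → Over r → E c s <+: E c r →
    sL s <+: r := by
  induction s with
  | nil => intros; simp [sL, sF]
  | cons a s ih =>
    intro r c hc hs hr h
    have ha := hs a (by simp)
    rcases r with _ | ⟨b, r⟩
    · rcases ha with rfl | rfl <;> simp [E, List.replicate_succ] at h
    have hb := hr b (by simp)
    have key : ∀ t u : List ℕ, Over t → ¬ (c :: u <+: E (3 - c) t) := by
      intro t u ht hh
      rcases t with _ | ⟨m, t⟩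
      · simp [E] at hh
      · have hm := ht m (by simp)
        obtain ⟨k, rfl⟩ : ∃ k, m = k + 1 := ⟨m - 1, by omega⟩
        simp only [E, List.replicate_succ, List.cons_append, List.cons_prefix_cons] at hh
        omega
    rcases s with _ | ⟨a', s⟩
    · rcases ha with rfl | rfl
      · simp [sL, sF]
      · rcases hb with rfl | rfl
        · simp only [E, List.replicate_succ, List.replicate_zero, List.cons_append,
            List.nil_append, List.cons_prefix_cons, true_and] at h
          exact absurd h (key _ _ hr.tail)
        · simp [sL, sF]
    · have e : sL (a :: a' :: s) = a :: sL (a' :: s) := sL_cons (by simp) [a]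
      rw [e]
      have hab : a = b := by
        rcases ha with rfl | rfl <;> rcases hb with rfl | rfl
        · rfl
        · exfalso
          have ha' := hs a' (by simp)
          obtain ⟨k, rfl⟩ : ∃ k, a' = k + 1 := ⟨a' - 1, by omega⟩
          simp only [E, List.replicate_succ, List.replicate_zero, List.cons_append,
            List.nil_append, List.cons_prefix_cons, true_and] at h
          omega
        · exfalso
          have e1 : E c (2 :: a' :: s) = c :: c :: E (3 - c) (a' :: s) := rfl
          have e2 : E c (1 :: r) = c :: E (3 - c) r := rfl
          rw [e1, e2] at h
          simp only [List.cons_prefix_cons, true_and] at h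
          exact key _ _ hr.tail h
        · rfl
      subst hab
      have e1 : ∀ z, E c (a :: z) = List.replicate a c ++ E (3 - c) z := fun _ => rfl
      rw [e1, e1, List.prefix_append_right_inj] at h
      exact (List.prefix_cons_inj a).2 (ih r (3 - c) (by omega) hs.tail hr.tail h)

/-- Position `p` of a word with run lengths `r` is either the start of a run or the second letter
of a run of length `2`. -/
lemma split_runs (r : List ℕ) (hr : Over r) : ∀ p, p < r.sum →
    ∃ r1 r2, r = r1 ++ r2 ∧ r2 ≠ [] ∧
      (r1.sum = p ∨ (r1.sum + 1 = p ∧ ∃ t, r2 = 2 :: t)) := by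
  induction r with
  | nil => intro p hp; simp at hp
  | cons a r ih =>
    intro p hp
    have ha := hr a (by simp)
    simp only [List.sum_cons] at hp
    by_cases h0 : p = 0
    · exact ⟨[], a :: r, rfl, by simp, Or.inl (by simp [h0])⟩
    by_cases h1 : p = 1 ∧ a = 2
    · exact ⟨[], a :: r, rfl, by simp, Or.inr ⟨by simp [h1.1], r, by rw [h1.2]⟩⟩
    obtain ⟨r1, r2, rfl, h2, h3⟩ := ih hr.tail (p - a) (by omega)
    refine ⟨a :: r1, r2, rfl, h2, ?_⟩
    simp only [List.sum_cons]
    rcases h3 with h3 | ⟨h3, h4⟩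
    · left; omega
    · right; exact ⟨by omega, h4⟩

lemma sum_sF {r : List ℕ} : r.sum ≤ (sF r).sum + 1 := by
  cases r with
  | nil => simp
  | cons n t => simp only [sF]; split_ifs <;> simp; omega

lemma sum_sL {r : List ℕ} : r.sum ≤ (sL r).sum + 1 := by
  simpa [sL] using sum_sF (r := r.reverse)

lemma E_cons_ne {c d : ℕ} {s r : List ℕ} (hs : s ≠ []) (hr : r ≠ []) (hs' : Over s)
    (hr' : Over r) (h : E c s <+: E d r) : c = d := by
  rcases s with _ | ⟨a, s⟩
  · exact absurd rfl hs
  rcases r with _ | ⟨b, r⟩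
  · exact absurd rfl hr
  rcases hs' a (by simp) with rfl | rfl <;> rcases hr' b (by simp) with rfl | rfl <;>
    simp [E, List.replicate_succ] at h <;> exact h.1

/-- If `p` is a period of `E e (r1 ++ r2)` and the position `p` starts the run after those counted
by `r1`, then the run lengths have the even period `r1.length`, up to a last run of length `1`. -/
lemma aligned {e p : ℕ} {r1 r2 : List ℕ} (he : e = 1 ∨ e = 2) (hr : Over (r1 ++ r2))
    (h2 : r2 ≠ []) (hs : r1.sum = p) (h : (E e (r1 ++ r2)).drop p <+: E e (r1 ++ r2)) :
    Even r1.length ∧ sL r2 <+: r1 ++ r2 := by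
  have hr2 : Over r2 := fun a ha => hr a (by simp [ha])
  have e1 : (E e (r1 ++ r2)).drop p = E (if Even r1.length then e else 3 - e) r2 := by
    rw [E_append r1 e he, List.drop_append_of_le_length (by rw [E_length]; omega), ← hs,
      ← E_length r1 e, List.drop_length, List.nil_append]
  rw [e1] at h
  have hc := E_cons_ne h2 (by simp [h2]) hr2 hr h
  have hev : Even r1.length := by
    by_contra hne
    rw [if_neg hne] at hc
    omega
  rw [if_pos hev] at h
  exact ⟨hev, lockstep _ _ _ he hr2 hr h⟩

lemma drop_unaligned {e p : ℕ} {r1 t : List ℕ} (he : e = 1 ∨ e = 2) (hs : r1.sum + 1 = p) :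
    ∃ f, (f = 1 ∨ f = 2) ∧ (E e (r1 ++ 2 :: t)).drop (p - 1) = f :: f :: E (3 - f) t := by
  refine ⟨if Even r1.length then e else 3 - e, by split_ifs <;> omega, ?_⟩
  rw [E_append r1 e he, List.drop_append_of_le_length (by rw [E_length]; omega),
    show p - 1 = (E e r1).length by rw [E_length]; omega, List.drop_length, List.nil_append]
  simp [E, List.replicate_succ]

lemma D_period {x : List ℕ} {p : ℕ} (hp : 0 < p) (h : IsCInf 1 2 x) (hl : p + 2 ≤ x.length)
    (hx : x.drop p <+: x) :
    ∃ r1 y2, D 1 2 x = r1 ++ y2 ∧ r1.sum = p ∧ Even r1.length ∧ y2 <+: r1 ++ y2 ∧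
      x.length ≤ (D 1 2 x).sum + 2 := by
  obtain ⟨c, r, hc, hr, rfl, hD⟩ := exists_runs_over h.over h.D.over
  rw [hD]
  rw [E_length] at hl ⊢
  have hlen : r.sum ≤ (sL (sF r)).sum + 2 := by
    have := sum_sF (r := r)
    have := sum_sL (r := sF r)
    omega
  -- It suffices to split the run lengths (without a stripped first run) at position `p`.
  suffices H : ∃ r1 r2, sF r = r1 ++ r2 ∧ r2 ≠ [] ∧ r1.sum = p ∧ Even r1.length ∧
      sL r2 <+: r1 ++ r2 by
    obtain ⟨r1, r2, e, h2, h3, h4, h5⟩ := H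
    have e2 : sL (r1 ++ r2) = r1 ++ sL r2 := sL_cons h2 r1
    refine ⟨r1, sL r2, by rw [e, e2], h3, h4, ?_, hlen⟩
    refine List.prefix_of_prefix_length_le h5 (l₃ := r1 ++ r2) ?_ (by simp)
    rw [List.prefix_append_right_inj]
    rcases sL_eq r2 with h | h
    · rw [h]
    · rw [h]; exact List.dropLast_prefix _
  rcases r with _ | ⟨a, r⟩
  · simp at hl
  rcases hr a (by simp) with rfl | rfl
  · -- The first run has length one and is stripped, so the second letter of `x` starts a run.
    have hsF : sF (1 :: r) = r := by simp [sF]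
    rw [hsF]
    simp only [List.sum_cons] at hl
    have hE : E c (1 :: r) = c :: E (3 - c) r := by simp [E]
    rw [hE] at hx
    obtain ⟨r1, r2, rfl, h2, h3 | ⟨h3, t, rfl⟩⟩ := split_runs r hr.tail p (by omega)
    · refine ⟨r1, r2, rfl, h2, h3, aligned (p := p) (e := 3 - c) (by omega) hr.tail h2 h3 ?_⟩
      obtain ⟨z, hz⟩ := hx
      refine ⟨z, ?_⟩
      have := congrArg (List.drop 1) hz
      rw [List.drop_append_of_le_length (by simp [E_length] at hl ⊢; omega)] at this
      simpa [Nat.add_comm] using this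
    · exfalso
      obtain ⟨f, hf, e⟩ := drop_unaligned (e := 3 - c) (t := t) (by omega) h3
      obtain ⟨k, rfl⟩ : ∃ k, p = k + 1 := ⟨p - 1, by omega⟩
      rw [List.drop_succ_cons] at hx
      rw [Nat.add_sub_cancel] at e
      rw [e] at hx
      rcases r1 with _ | ⟨b, r1⟩
      · simp [E, List.replicate_succ] at hx
        omega
      · have hb := hr b (by simp)
        obtain ⟨k, rfl⟩ : ∃ k, b = k + 1 := ⟨b - 1, by omega⟩
        simp [E, List.replicate_succ] at hx
        omega
  · -- The first run has length two, so a shift by `p` cannot send it across a run boundary.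
    have hsF : sF (2 :: r) = 2 :: r := by simp [sF]
    rw [hsF]
    obtain ⟨r1, r2, e0, h2, h3 | ⟨h3, t, rfl⟩⟩ := split_runs (2 :: r) hr p (by omega)
    · refine ⟨r1, r2, e0, h2, h3, ?_⟩
      rw [e0] at hx hr
      exact aligned hc hr h2 h3 hx
    · exfalso
      obtain ⟨f, hf, e⟩ := drop_unaligned (e := c) (t := t) hc h3
      rw [← e0] at e
      have e' : (E c (2 :: r)).drop p = f :: E (3 - f) t := by
        have := congrArg (List.drop 1) e
        rw [List.drop_drop] at this
        simpa [show p - 1 + 1 = p by omega] using this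
      rw [e'] at hx
      have hE : E c (2 :: r) = c :: c :: E (3 - c) r := by simp [E, List.replicate_succ]
      rw [hE] at hx
      have ht : t ≠ [] := by
        rintro rfl
        rw [e0] at hl
        simp at hl
        omega
      have hrt : Over t := fun a ha => hr a (by rw [e0]; simp [ha])
      rcases t with _ | ⟨b, t⟩
      · exact ht rfl
      · have hb := hrt b (by simp)
        obtain ⟨k, rfl⟩ : ∃ k, b = k + 1 := ⟨b - 1, by omega⟩
        simp [E, List.replicate_succ] at hx
        omega

/-- Almost-squares: C∞-words with period `p` and length at least `2p - 5`. -/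
def NS (p : ℕ) (x : List ℕ) : Prop :=
  IsCInf 1 2 x ∧ 2 * p ≤ x.length + 5 ∧ x.drop p <+: x

lemma descent {p : ℕ} {x : List ℕ} (hp : 20 ≤ p) (h : NS p x) :
    ∃ q y, NS q y ∧ Even q ∧ 10 ≤ q ∧ q < p ∧ (y.take q).sum = p := by
  obtain ⟨hC, hl, hd⟩ := h
  obtain ⟨r1, y2, hD, hs, hev, hpre, hlen⟩ := D_period (by omega) hC (by omega) hd
  have hY := hC.D
  rw [hD] at hY hlen
  have ho1 : Over r1 := fun a ha => hY.over a (by simp [ha])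
  have hq := ho1.sum_le
  have hlt := sum_ge ho1 (fun hh => hY.no_cube 1 (hh.trans ⟨[], y2, rfl⟩)) (by omega)
  refine ⟨r1.length, r1 ++ y2, ⟨hY, ?_, by simpa using hpre⟩, hev, by omega, by omega,
    by simpa using hs⟩
  rw [List.length_append]
  by_contra hcon
  obtain ⟨v, rfl⟩ : y2 <+: r1 :=
    List.prefix_of_prefix_length_le hpre (List.prefix_append _ _) (by omega)
  simp only [List.length_append, List.sum_append] at hcon hlen hs
  -- `v` is the part of `D x` that a full square would repeat; its sum is at most `7`.
  have := sum_ge (v := v) (fun a ha => ho1 a (by simp [ha]))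
    (fun hh => hY.no_cube 1 (hh.trans ⟨y2, y2, rfl⟩)) (by omega)
  omega

/-! ### Enumeration of short words -/

/-- The first `f` derivatives (starting with the word itself) are over `{1,2}`. -/
def cinf : ℕ → List ℕ → Bool
  | 0, _ => true
  | f + 1, w => w.all (fun a => a == 1 || a == 2) && cinf f (D 1 2 w)

/-- A list containing all C∞-words of length `n`; letters are appended one at a time, and only the
first twelve derivatives are tested. -/
def words : ℕ → List (List ℕ)
  | 0 => [[]]
  | n + 1 => ((words n).flatMap fun w => [w ++ [1], w ++ [2]]).filter (cinf 12)

lemma IsCInf.cinf {x : List ℕ} (h : IsCInf 1 2 x) (f : ℕ) : cinf f x = true := by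
  induction f generalizing x with
  | zero => rfl
  | succ f ih =>
    simp only [Kola.cinf, Bool.and_eq_true, List.all_eq_true, Bool.or_eq_true, beq_iff_eq]
    exact ⟨h.over, ih h.D⟩

lemma isCInf_of_cinf {f : ℕ} {x : List ℕ} (h : cinf f x = true) (h0 : (D 1 2)^[f] x = []) :
    IsCInf 1 2 x := by
  intro k
  induction f generalizing x k with
  | zero =>
    simp only [Function.iterate_zero, id] at h0
    subst h0
    have : (D 1 2)^[k] [] = [] := Function.iterate_fixed rfl k
    simp [this]
  | succ f ih =>
    simp only [Kola.cinf, Bool.and_eq_true, List.all_eq_true, Bool.or_eq_true, beq_iff_eq] at h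
    cases k with
    | zero => exact h.1
    | succ k => exact ih h.2 h0 k

lemma IsCInf.mem_words {x : List ℕ} (h : IsCInf 1 2 x) : x ∈ words x.length := by
  induction x using List.reverseRecOn with
  | nil => simp [words]
  | append_singleton x a ih =>
    rw [List.length_append, List.length_singleton, words, List.mem_filter]
    refine ⟨List.mem_flatMap.2 ⟨x, ih h.left, ?_⟩, h.cinf 12⟩
    rcases h.over a (by simp) with rfl | rfl <;> simp

lemma check_even : ∀ q ∈ [10, 12, 14, 16, 18], ∀ u ∈ words q,
    cinf 12 (u ++ u.take (q - 5)) = true → u.sum < 20 ∨ u.sum = 27 := by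
  decide +kernel

lemma check_small : ∀ n ∈ List.range 20, ∀ u ∈ words n,
    cinf 12 (u ++ u) = true → n = 0 ∨ n = 1 ∨ n = 2 ∨ n = 3 ∨ n = 9 := by
  decide +kernel

lemma NS.small {q : ℕ} {y : List ℕ} (h : NS q y) (hq : q ∈ [10, 12, 14, 16, 18]) :
    (y.take q).sum < 20 ∨ (y.take q).sum = 27 := by
  obtain ⟨hC, hl, hd⟩ := h
  have hq' : 10 ≤ q := by
    simp only [List.mem_cons, List.not_mem_nil, or_false] at hq
    omega
  have hlen : (y.take q).length = q := by rw [List.length_take]; omega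
  have hm := (hC.take q).mem_words
  rw [hlen] at hm
  refine check_even q hq _ hm ?_
  have e : y.take q ++ (y.take q).take (q - 5) = y.take (q + (q - 5)) := by
    rw [List.take_add, List.take_take, Nat.min_eq_left (by omega)]
    congr 1
    obtain ⟨z, hz⟩ := hd
    conv_lhs => rw [← hz]
    rw [List.take_append_of_le_length (by rw [List.length_drop]; omega)]
  rw [e]
  exact (hC.take _).cinf 12

lemma no_even (p : ℕ) : 20 ≤ p → Even p → ∀ x, ¬ NS p x := by
  induction p using Nat.strong_induction_on with
  | _ p ih =>
    intro hp hev x hx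
    obtain ⟨q, y, hy, hqe, hq, hqp, hsum⟩ := descent hp hx
    by_cases h20 : 20 ≤ q
    · exact ih q hqp h20 hqe y hy
    · have hm : q ∈ [10, 12, 14, 16, 18] := by
        obtain ⟨m, rfl⟩ := hqe
        simp only [List.mem_cons, List.not_mem_nil, or_false]
        omega
      obtain ⟨m, rfl⟩ := hev
      have := hy.small hm
      omega

lemma square_cases {w : List ℕ} (h : IsCInf 1 2 (w ++ w)) (hw : w ≠ []) :
    w.length = 1 ∨ w.length = 2 ∨ w.length = 3 ∨ w.length = 9 ∨ w.length = 27 := by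
  by_cases h20 : 20 ≤ w.length
  · have hN : NS w.length (w ++ w) := ⟨h, by simp; omega, by simp⟩
    obtain ⟨q, y, hy, hqe, hq, hqp, hsum⟩ := descent h20 hN
    have hq20 : ¬ 20 ≤ q := fun hh => no_even q hh hqe y hy
    have hm : q ∈ [10, 12, 14, 16, 18] := by
      obtain ⟨m, rfl⟩ := hqe
      simp only [List.mem_cons, List.not_mem_nil, or_false]
      omega
    have := hy.small hm
    omega
  · have := check_small w.length (List.mem_range.2 (by omega)) w h.left.mem_words (h.cinf 12)
    have := List.length_pos_iff.2 hw
    omega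

/-- The lengths of squares among C∞-words over {1,2} are exactly
1, 2, 3, 9 and 27. -/
theorem square_lengths :
    {n : ℕ | ∃ w : List ℕ, w.length = n ∧ w ≠ [] ∧ IsCInf 1 2 (w ++ w)} =
      ({1, 2, 3, 9, 27} : Set ℕ) := by
  ext n
  simp only [Set.mem_ofPred_eq, Set.mem_insert_iff, Set.mem_singleton_iff]
  constructor
  · rintro ⟨w, rfl, hw, h⟩
    exact square_cases h hw
  · rintro (rfl | rfl | rfl | rfl | rfl)
    · exact ⟨[1], rfl, by simp, isCInf_of_cinf (f := 12) (by decide +kernel) (by decide +kernel)⟩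
    · exact ⟨[1, 2], rfl, by simp,
        isCInf_of_cinf (f := 12) (by decide +kernel) (by decide +kernel)⟩
    · exact ⟨[1, 1, 2], rfl, by simp,
        isCInf_of_cinf (f := 12) (by decide +kernel) (by decide +kernel)⟩
    · exact ⟨[1, 1, 2, 1, 1, 2, 2, 1, 2], rfl, by simp,
        isCInf_of_cinf (f := 12) (by decide +kernel) (by decide +kernel)⟩
    · exact ⟨[1, 1, 2, 1, 1, 2, 2, 1, 2, 2, 1, 2, 1, 1, 2, 2, 1, 2, 2, 1, 1, 2, 1, 2, 2, 1, 2], rfl, by simp,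
        isCInf_of_cinf (f := 12) (by decide +kernel) (by decide +kernel)⟩

end Kola
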